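/- Let S be a finite set, let P be a probability distribution on S, and let Q₁,…,Q_m be probability distributions on S, each having the same support as P and each distinct from P. Let X₁,…,Xₙ be drawn i.i.d. from P. Then the probability that some wrong hypothesis attains at least as large a log-likelihood as the truth, i.e. Pr[∃ i ∈ {1,…,m} : Σ_{j=1}^n ln Q_i(X_j) ≥ Σ_{j=1}^n ln P(X_j)], tends to 0 as n → ∞. -/

import Mathlib

/-!
The proof is a Chernoff bound at exponent `1/2`. When hypothesis `Q` attains at least the
likelihood of `P` on a sample `x` of positive probability, `∏ P (x j) ≤ ∏ √(P (x j) * Q (x j))`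
(`prod_le_prod_sqrt`). Summing over all samples, the right side factorises into the `n`-th power of
the Bhattacharyya coefficient `∑ s, √(P s * Q s)`, which is strictly below `1` for `Q ≠ P`
(`sum_sqrt_lt_one`). A union bound over the finitely many hypotheses leaves a finite sum of
geometric sequences, each tending to `0`.
-/

open Finset Filter

noncomputable section

/-- `P` is a probability distribution on the finite set `S`. -/
def IsPMF {S : Type*} [Fintype S] (P : S → ℝ) : Prop :=
  (∀ s, 0 ≤ P s) ∧ ∑ s, P s = 1

/-- Probability of the event `E` under `n` i.i.d. samples from `P`,
i.e. under the product distribution on `Sⁿ`. -/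
def iidProb {S : Type*} [Fintype S] (P : S → ℝ) {n : ℕ}
    (E : (Fin n → S) → Prop) : ℝ :=
  ∑ x : Fin n → S, Set.indicator {x | E x} (fun x => ∏ i, P (x i)) x

/-- The Bhattacharyya coefficient of two distinct distributions is less than one: the strict form
of the AM-GM inequality `√(P s * Q s) ≤ (P s + Q s) / 2` at a point where they differ. -/
lemma sum_sqrt_lt_one {S : Type*} [Fintype S] {P Q : S → ℝ} (hP : IsPMF P) (hQ : IsPMF Q)
    (hne : Q ≠ P) : ∑ s, √(P s * Q s) < 1 := by
  have key : ∀ s, √(P s * Q s) = (P s + Q s) / 2 - (√(P s) - √(Q s)) ^ 2 / 2 := by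
    intro s
    rw [Real.sqrt_mul (hP.1 s)]
    linear_combination (1 / 2) * Real.sq_sqrt (hP.1 s) + (1 / 2) * Real.sq_sqrt (hQ.1 s)
  obtain ⟨t, ht⟩ := Function.ne_iff.mp hne
  have hlt : ∑ s, √(P s * Q s) < ∑ s, (P s + Q s) / 2 := by
    refine Finset.sum_lt_sum (fun s _ => ?_) ⟨t, Finset.mem_univ t, ?_⟩
    · rw [key s]
      linarith [sq_nonneg (√(P s) - √(Q s))]
    · have h : √(P t) - √(Q t) ≠ 0 := fun h =>
        ht ((Real.sqrt_inj (hP.1 t) (hQ.1 t)).mp (sub_eq_zero.mp h)).symm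
      rw [key t]
      linarith [pow_pos (abs_pos.mpr h) 2, sq_abs (√(P t) - √(Q t))]
  rw [← Finset.sum_div, Finset.sum_add_distrib, hP.2, hQ.2] at hlt
  linarith

lemma prod_le_prod_sqrt {S : Type*} {P Q : S → ℝ} (hP : ∀ s, 0 ≤ P s)
    (hsupp : ∀ s, 0 < Q s ↔ 0 < P s) {n : ℕ} (x : Fin n → S)
    (hx : ∑ j, Real.log (P (x j)) ≤ ∑ j, Real.log (Q (x j))) :
    ∏ j, P (x j) ≤ ∏ j, √(P (x j) * Q (x j)) := by
  by_cases h : ∀ j, 0 < P (x j)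
  · have hQ : ∀ j, 0 < Q (x j) := fun j => (hsupp _).mpr (h j)
    rw [← Real.log_prod fun j _ => (h j).ne', ← Real.log_prod fun j _ => (hQ j).ne',
      Real.log_le_log_iff (Finset.prod_pos fun j _ => h j) (Finset.prod_pos fun j _ => hQ j)] at hx
    have h0 : 0 ≤ ∏ j, P (x j) := Finset.prod_nonneg fun j _ => hP _
    refine abs_le_of_sq_le_sq' ?_ (Finset.prod_nonneg fun j _ => Real.sqrt_nonneg _) |>.2
    rw [← Finset.prod_pow (f := fun j => √(P (x j) * Q (x j))),
      Finset.prod_congr rfl fun j _ => Real.sq_sqrt (mul_pos (h j) (hQ j)).le,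
      Finset.prod_mul_distrib, sq]
    exact mul_le_mul_of_nonneg_left hx h0
  -- Off the support the logarithms are junk, but the sample then has probability zero.
  · push Not at h
    obtain ⟨j, hj⟩ := h
    rw [Finset.prod_eq_zero (Finset.mem_univ j) (le_antisymm hj (hP _))]
    exact Finset.prod_nonneg fun j _ => Real.sqrt_nonneg _

/-- **Consistency of maximum likelihood.** If `Q₁,…,Q_m` all have the same
support as the true distribution `P` and are all distinct from `P`, then the
probability that some wrong hypothesis attains at least as large a
log-likelihood as the truth on `n` i.i.d. samples from `P` tends to `0` as
`n → ∞`. -/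
theorem stmt12 {S : Type*} [Fintype S] (P : S → ℝ) (hP : IsPMF P)
    (m : ℕ) (Q : Fin m → S → ℝ) (hQ : ∀ i, IsPMF (Q i))
    (hsupp : ∀ i s, 0 < Q i s ↔ 0 < P s) (hne : ∀ i, Q i ≠ P) :
    Tendsto
      (fun n : ℕ => iidProb P (fun X : Fin n → S =>
        ∃ i, (∑ j, Real.log (P (X j))) ≤ ∑ j, Real.log (Q i (X j))))
      atTop (nhds 0) := by
  have hb : ∀ n : ℕ, iidProb P (fun X : Fin n → S =>
      ∃ i, (∑ j, Real.log (P (X j))) ≤ ∑ j, Real.log (Q i (X j)))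
      ≤ ∑ i, (∑ s, √(P s * Q i s)) ^ n := by
    intro n
    have hpow : ∀ i, (∑ s, √(P s * Q i s)) ^ n = ∑ x : Fin n → S, ∏ j, √(P (x j) * Q i (x j)) :=
      fun i => Fintype.sum_pow _ n
    simp only [hpow]
    rw [Finset.sum_comm]
    refine Finset.sum_le_sum fun x _ => ?_
    have hnn : ∀ i, 0 ≤ ∏ j, √(P (x j) * Q i (x j)) := fun i =>
      Finset.prod_nonneg fun j _ => Real.sqrt_nonneg _
    refine Set.indicator_apply_le' ?_ fun _ => Finset.sum_nonneg fun i _ => hnn i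
    rintro ⟨i, hi⟩
    exact (prod_le_prod_sqrt hP.1 (hsupp i) x hi).trans
      (Finset.single_le_sum (f := fun i => ∏ j, √(P (x j) * Q i (x j)))
        (fun i _ => hnn i) (Finset.mem_univ i))
  refine squeeze_zero (fun n => ?_) hb ?_
  · exact Finset.sum_nonneg fun x _ =>
      Set.indicator_nonneg (fun x _ => Finset.prod_nonneg fun j _ => hP.1 _) x
  · rw [← Finset.sum_const_zero (s := (Finset.univ : Finset (Fin m)))]
    exact tendsto_finsetSum _ fun i _ => tendsto_pow_atTop_nhds_zero_of_lt_one
      (Finset.sum_nonneg fun s _ => Real.sqrt_nonneg _) (sum_sqrt_lt_one hP (hQ i) (hne i))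

end
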